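/- Fix z ∈ (0, 1/8), q ∈ [1/2, 1), and β ∈ (1/2, 1). For each integer d ≥ 2, let g ∈ ℝ^d be a unit vector, let s_d ∈ [0,1) be the unique value with P[⟨g, u⟩ ≥ −s_d] = q for u uniform on S^{d-1}, let n_d = ⌈d^{3z}⌉, let u₁, …, u_{n_d} be i.i.d. uniform on S^{d-1}, set φ̂_d(u) = (1-β)·1{⟨g,u⟩ > −s_d} − β·1{⟨g,u⟩ ≤ −s_d}, Ĝ_d = (1/n_d)·Σ_{i=1}^{n_d} φ̂_d(uᵢ)uᵢ, μ_d = E[⟨g, Ĝ_d⟩ / ‖Ĝ_d‖], and J_d = √(n_d)·E[φ̂_d(u₁)·⟨g,u₁⟩] / √(E[φ̂_d(u₁)²]). Then there exist a constant K > 0 and an integer D₀ such that for all d ≥ D₀, |μ_d / J_d − 1| ≤ K·d^{−z}. -/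

import Mathlib

open MeasureTheory Metric Set Real
open scoped RealInnerProductSpace

/-- The uniform (normalized rotation-invariant) probability measure on the unit
sphere `S^{d-1} ⊂ ℝ^d`. -/
noncomputable def sphereUniform (d : ℕ) :
    Measure (sphere (0 : EuclideanSpace ℝ (Fin d)) 1) :=
  ((volume : Measure (EuclideanSpace ℝ (Fin d))).toSphere univ)⁻¹ •
    (volume : Measure (EuclideanSpace ℝ (Fin d))).toSphere

/-- The AGREST sampling weight function
`φ̂(u) = (1-β)·1{⟨g,u⟩ > -s} − β·1{⟨g,u⟩ ≤ -s}`. -/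
noncomputable def phiHat (d : ℕ) (g : EuclideanSpace ℝ (Fin d)) (s β : ℝ)
    (u : sphere (0 : EuclideanSpace ℝ (Fin d)) 1) : ℝ :=
  if -s < ⟪g, (u : EuclideanSpace ℝ (Fin d))⟫ then 1 - β else -β

/-- The AGREST estimator `Ĝ = (1/n)·Σᵢ φ̂(uᵢ)·uᵢ`. -/
noncomputable def Ghat (d n : ℕ) (g : EuclideanSpace ℝ (Fin d)) (s β : ℝ)
    (ω : Fin n → (sphere (0 : EuclideanSpace ℝ (Fin d)) 1)) :
    EuclideanSpace ℝ (Fin d) :=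
  (1 / (n : ℝ)) • ∑ i, phiHat d g s β (ω i) • ((ω i : EuclideanSpace ℝ (Fin d)))


open Pointwise in
lemma sphereUniform_prob (d : ℕ) (hd : 2 ≤ d) : IsProbabilityMeasure (sphereUniform d) := by
  have : Nonempty (Fin d) := ⟨⟨0, by omega⟩⟩
  have : Nontrivial (EuclideanSpace ℝ (Fin d)) := inferInstance
  constructor
  rw [sphereUniform, Measure.smul_apply, smul_eq_mul]
  apply ENNReal.inv_mul_cancel
  · rw [Ne, Measure.measure_univ_eq_zero]
    exact Measure.toSphere_ne_zero _
  · exact measure_ne_top _ _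

noncomputable def rotS {d : ℕ} (R : EuclideanSpace ℝ (Fin d) ≃ₗᵢ[ℝ] EuclideanSpace ℝ (Fin d))
    (u : sphere (0 : EuclideanSpace ℝ (Fin d)) 1) : sphere (0 : EuclideanSpace ℝ (Fin d)) 1 :=
  ⟨R u, by simp⟩

lemma rotS_cont {d : ℕ} (R : EuclideanSpace ℝ (Fin d) ≃ₗᵢ[ℝ] EuclideanSpace ℝ (Fin d)) :
    Continuous (rotS R) := by
  unfold rotS
  fun_prop

open Pointwise in
lemma rotS_mp {d : ℕ} (R : EuclideanSpace ℝ (Fin d) ≃ₗᵢ[ℝ] EuclideanSpace ℝ (Fin d)) :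
    MeasurePreserving (rotS R) (sphereUniform d) (sphereUniform d) := by
  refine ⟨(rotS_cont R).measurable, ?_⟩
  rw [sphereUniform, Measure.map_smul]
  congr 1
  ext t ht
  rw [Measure.map_apply (rotS_cont R).measurable ht, Measure.toSphere_apply' _ ht,
    Measure.toSphere_apply' _ ((rotS_cont R).measurable ht)]
  congr 1
  symm
  rw [← R.measurePreserving.measure_preimage_equiv (f := R.toMeasurableEquiv)]
  congr 1
  ext x
  rw [Iff.comm]
  simp only [Set.mem_smul, Set.mem_image, Set.mem_preimage]
  constructor
  · rintro ⟨r, hr, y, ⟨u, hu, rfl⟩, rfl⟩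
    exact ⟨r, hr, R u, ⟨_, hu, rfl⟩, by simp⟩
  · rintro ⟨r, hr, y, ⟨u, hu, rfl⟩, h⟩
    refine ⟨r, hr, R.symm u, ⟨rotS R.symm u, ?_, rfl⟩, ?_⟩
    · have : rotS R (rotS R.symm u) = u := by
        ext1; simp [rotS]
      simpa [this] using hu
    · apply R.injective
      simpa using h

lemma mom_eq {d : ℕ} (F : ℝ → ℝ) (hF : Continuous F) (v w : EuclideanSpace ℝ (Fin d))
    (h : ‖v‖ = ‖w‖) :
    ∫ u, F ⟪v, (u : EuclideanSpace ℝ (Fin d))⟫ ∂(sphereUniform d) =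
    ∫ u, F ⟪w, (u : EuclideanSpace ℝ (Fin d))⟫ ∂(sphereUniform d) := by
  set R : EuclideanSpace ℝ (Fin d) ≃ₗᵢ[ℝ] EuclideanSpace ℝ (Fin d) :=
    Submodule.reflection (ℝ ∙ (v - w))ᗮ with hR
  have hRv : R v = w := Submodule.reflection_sub h
  have h1 := (rotS_mp R).map_eq
  conv_rhs => rw [← h1]
  rw [integral_map (rotS_mp R).aemeasurable]
  · congr 1
    ext u
    have : ⟪w, ((rotS R u : sphere (0 : EuclideanSpace ℝ (Fin d)) 1) : EuclideanSpace ℝ (Fin d))⟫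
      = ⟪v, (u : EuclideanSpace ℝ (Fin d))⟫ := by
      rw [← hRv]; exact R.inner_map_map _ _
    rw [this]
  · apply Continuous.aestronglyMeasurable
    fun_prop

lemma sph_int {d : ℕ} (hd : 2 ≤ d) (F : sphere (0 : EuclideanSpace ℝ (Fin d)) 1 → ℝ)
    (hF : Continuous F) : Integrable F (sphereUniform d) := by
  have := sphereUniform_prob d hd
  exact hF.integrable_of_hasCompactSupport (HasCompactSupport.of_compactSpace F)

lemma mom1 {d : ℕ} (v : EuclideanSpace ℝ (Fin d)) :
    ∫ u, ⟪v, (u : EuclideanSpace ℝ (Fin d))⟫ ∂(sphereUniform d) = 0 := by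
  have := mom_eq (fun x => x) continuous_id v (-v) (by simp)
  simp only [inner_neg_left, integral_neg] at this
  linarith

lemma mom_abs {d : ℕ} (hd : 2 ≤ d) (v : EuclideanSpace ℝ (Fin d)) :
    2 * ∫ u, max (-⟪v, (u : EuclideanSpace ℝ (Fin d))⟫) 0 ∂(sphereUniform d) =
    ∫ u, |⟪v, (u : EuclideanSpace ℝ (Fin d))⟫| ∂(sphereUniform d) := by
  have := mom_eq (fun x => max (-x) 0) (by fun_prop) v (-v) (by simp)
  rw [two_mul]
  nth_rewrite 2 [this]
  rw [← integral_add (sph_int hd _ (by fun_prop)) (sph_int hd _ (by fun_prop))]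
  congr 1
  ext u
  rw [inner_neg_left, neg_neg]
  generalize ⟪v, (u : EuclideanSpace ℝ (Fin d))⟫ = x
  rcases le_total 0 x with h | h
  · rw [abs_of_nonneg h, max_eq_right (by linarith), max_eq_left h]; ring
  · rw [abs_of_nonpos h, max_eq_left (by linarith), max_eq_right h]; ring

lemma sum_coord {d : ℕ} (u : sphere (0 : EuclideanSpace ℝ (Fin d)) 1) :
    ∑ i, (⟪EuclideanSpace.single i (1:ℝ), (u : EuclideanSpace ℝ (Fin d))⟫)^2 = 1 := by
  have h : ‖(u : EuclideanSpace ℝ (Fin d))‖ = 1 := by simp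
  have h2 := EuclideanSpace.real_norm_sq_eq (u : EuclideanSpace ℝ (Fin d))
  rw [h] at h2
  simp only [EuclideanSpace.inner_single_left]
  simpa using h2.symm

lemma mom2 {d : ℕ} (hd : 2 ≤ d) (v : EuclideanSpace ℝ (Fin d)) (hv : ‖v‖ = 1) :
    ∫ u, ⟪v, (u : EuclideanSpace ℝ (Fin d))⟫^2 ∂(sphereUniform d) = 1 / d := by
  have := sphereUniform_prob d hd
  have h1 : ∫ u : sphere (0 : EuclideanSpace ℝ (Fin d)) 1, ∑ i,
      (⟪EuclideanSpace.single i (1:ℝ), (u : EuclideanSpace ℝ (Fin d))⟫)^2 ∂(sphereUniform d) = 1 := by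
    simp only [sum_coord]; simp
  rw [integral_finsetSum _ (fun i _ => sph_int hd _ (by fun_prop))] at h1
  have h2 : ∀ i : Fin d, ∫ u : sphere (0 : EuclideanSpace ℝ (Fin d)) 1,
      (⟪EuclideanSpace.single i (1:ℝ), (u : EuclideanSpace ℝ (Fin d))⟫)^2 ∂(sphereUniform d) =
      ∫ u, ⟪v, (u : EuclideanSpace ℝ (Fin d))⟫^2 ∂(sphereUniform d) := fun i =>
    mom_eq (fun x => x^2) (by fun_prop) _ _ (by simp [hv])
  simp only [h2] at h1
  simp at h1
  have : (d:ℝ) ≠ 0 := by positivity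
  field_simp
  linarith

lemma mom4 {d : ℕ} (hd : 2 ≤ d) (v : EuclideanSpace ℝ (Fin d)) (hv : ‖v‖ = 1) :
    ∫ u, ⟪v, (u : EuclideanSpace ℝ (Fin d))⟫^4 ∂(sphereUniform d) ≤ 3 / (d:ℝ)^2 := by
  have := sphereUniform_prob d hd
  set M := ∫ u, ⟪v, (u : EuclideanSpace ℝ (Fin d))⟫^4 ∂(sphereUniform d) with hM
  have hM0 : 0 ≤ M := integral_nonneg (fun u => by positivity)
  let e : Fin d → EuclideanSpace ℝ (Fin d) := fun i => EuclideanSpace.single i (1:ℝ)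
  have hne : ∀ i, ‖e i‖ = 1 := fun i => by simp [e]
  have hE : ∀ i, ∫ u : sphere (0 : EuclideanSpace ℝ (Fin d)) 1,
      (⟪e i, (u : EuclideanSpace ℝ (Fin d))⟫)^4 ∂(sphereUniform d) = M := fun i =>
    mom_eq (fun x => x^4) (by fun_prop) _ _ (by simp [hne, hv])
  have hS : ∀ x : EuclideanSpace ℝ (Fin d), ‖x‖^2 = 2 → ∫ u : sphere (0 : EuclideanSpace ℝ (Fin d)) 1,
      (⟪x, (u : EuclideanSpace ℝ (Fin d))⟫)^4 ∂(sphereUniform d) = 4 * M := by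
    intro x hx
    have hx' : ‖x‖ = √2 := by
      rw [← hx]; simp
    rw [mom_eq (fun x => x^4) (by fun_prop) x (√2 • v) (by simp [norm_smul, hv, hx', abs_of_nonneg])]
    rw [hM, ← integral_const_mul]
    congr 1
    ext u
    rw [real_inner_smul_left, mul_pow]
    congr 1
    have : (√2)^4 = ((√2)^2)^2 := by ring
    rw [this]; norm_num
  have hP : ∀ i j, M / 3 ≤ ∫ u : sphere (0 : EuclideanSpace ℝ (Fin d)) 1,
      (⟪e i, (u : EuclideanSpace ℝ (Fin d))⟫)^2 * (⟪e j, (u : EuclideanSpace ℝ (Fin d))⟫)^2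
        ∂(sphereUniform d) := by
    intro i j
    by_cases hij : i = j
    · subst hij
      have : ∀ x : ℝ, x^2 * x^2 = x^4 := fun x => by ring
      simp only [this, hE]
      linarith
    · have ho : ⟪e i, e j⟫ = 0 := by
        simp [e, EuclideanSpace.inner_single_left, hij]
      have h1 := hS (e i + e j) (by rw [norm_add_sq_real, hne, hne, ho]; norm_num)
      have h2 := hS (e i - e j) (by rw [norm_sub_sq_real, hne, hne, ho]; norm_num)
      have h3 : ∫ u : sphere (0 : EuclideanSpace ℝ (Fin d)) 1, 
        ((⟪e i + e j, (u : EuclideanSpace ℝ (Fin d))⟫)^4 + (⟪e i - e j, (u : EuclideanSpace ℝ (Fin d))⟫)^4) ∂(sphereUniform d)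
        = ∫ u : sphere (0 : EuclideanSpace ℝ (Fin d)) 1, ((2 * (⟪e i, (u : EuclideanSpace ℝ (Fin d))⟫)^4
         + 2 * (⟪e j, (u : EuclideanSpace ℝ (Fin d))⟫)^4) + 12 * ((⟪e i, (u : EuclideanSpace ℝ (Fin d))⟫)^2 * (⟪e j, (u : EuclideanSpace ℝ (Fin d))⟫)^2)) ∂(sphereUniform d) := by
        congr 1
        ext u
        rw [inner_add_left, inner_sub_left]
        ring
      rw [integral_add (sph_int hd _ (by fun_prop)) (sph_int hd _ (by fun_prop)), h1, h2,
        integral_add (sph_int hd _ (by fun_prop)) (sph_int hd _ (by fun_prop)),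
        integral_add (sph_int hd _ (by fun_prop)) (sph_int hd _ (by fun_prop)),
        integral_const_mul, integral_const_mul, integral_const_mul, hE, hE] at h3
      linarith
  have h1 : ∫ u : sphere (0 : EuclideanSpace ℝ (Fin d)) 1, ∑ i, ∑ j,
      (⟪e i, (u : EuclideanSpace ℝ (Fin d))⟫)^2 * (⟪e j, (u : EuclideanSpace ℝ (Fin d))⟫)^2
        ∂(sphereUniform d) = 1 := by
    simp only [← Finset.mul_sum, e, sum_coord, mul_one]; simp
  rw [integral_finsetSum _ (fun i _ => sph_int hd _ (by fun_prop))] at h1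
  have h2 : ∑ i : Fin d, ∑ j : Fin d, M / 3 ≤ 1 := by
    rw [← h1]
    refine Finset.sum_le_sum fun i _ => ?_
    rw [integral_finsetSum _ (fun i _ => sph_int hd _ (by fun_prop))]
    exact Finset.sum_le_sum fun j _ => hP i j
  simp at h2
  have : (0:ℝ) < d := by positivity
  rw [le_div_iff₀ (by positivity)]
  nlinarith

lemma abs_lower {d : ℕ} (hd : 2 ≤ d) (v : EuclideanSpace ℝ (Fin d)) (hv : ‖v‖ = 1) :
    1 / (2 * √d) ≤ ∫ u, |⟪v, (u : EuclideanSpace ℝ (Fin d))⟫| ∂(sphereUniform d) := by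
  have hd0 : (0:ℝ) < d := by positivity
  have hr : 0 < √(d:ℝ) := by positivity
  have hrr : √(d:ℝ)^2 = d := Real.sq_sqrt hd0.le
  have key : ∀ t : ℝ, 0 ≤ t → t^2 - t^4/6 ≤ t := by
    intro t ht
    have : t - t^3/6 ≤ 1 := by
      nlinarith [mul_nonneg ht (sq_nonneg (t - 3/2)), sq_nonneg (t-3/2), sq_nonneg (t - 1)]
    nlinarith
  have h1 : ∫ u : sphere (0 : EuclideanSpace ℝ (Fin d)) 1, (√d * ⟪v, (u : EuclideanSpace ℝ (Fin d))⟫^2 -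
      (√d)^3/6 * ⟪v, (u : EuclideanSpace ℝ (Fin d))⟫^4) ∂(sphereUniform d) ≤
      ∫ u, |⟪v, (u : EuclideanSpace ℝ (Fin d))⟫| ∂(sphereUniform d) := by
    apply integral_mono (sph_int hd _ (by fun_prop)) (sph_int hd _ (by fun_prop))
    intro u
    simp only
    generalize ⟪v, (u : EuclideanSpace ℝ (Fin d))⟫ = x
    have := key (√d * |x|) (by positivity)
    have e1 : x^2 = |x|^2 := (sq_abs x).symm
    have e2 : x^4 = |x|^4 := by rw [show x^4 = (x^2)^2 by ring, e1]; ring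
    rw [e1, e2]
    refine le_of_mul_le_mul_left ?_ hr
    calc _ = (√d * |x|)^2 - (√d * |x|)^4/6 := by ring
      _ ≤ _ := this
  refine le_trans ?_ h1
  rw [integral_sub (sph_int hd _ (by fun_prop)) (sph_int hd _ (by fun_prop)),
    integral_const_mul, integral_const_mul, mom2 hd v hv]
  have h4 := mom4 hd v hv
  have : √(d:ℝ)^3/6 * ∫ u, ⟪v, (u : EuclideanSpace ℝ (Fin d))⟫^4 ∂(sphereUniform d) ≤
    √(d:ℝ)^3/6 * (3 / (d:ℝ)^2) := by gcongr
  refine le_trans ?_ (sub_le_sub_left this _)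
  rw [← hrr]
  rw [Real.sqrt_sq hr.le]
  apply le_of_eq
  field_simp
  norm_num

lemma phi_meas {d : ℕ} (g : EuclideanSpace ℝ (Fin d)) (s β : ℝ) :
    Measurable (phiHat d g s β) := by
  unfold phiHat
  apply Measurable.ite _ measurable_const measurable_const
  apply measurableSet_lt measurable_const
  apply Continuous.measurable
  fun_prop

lemma phi_sq {d : ℕ} (g : EuclideanSpace ℝ (Fin d)) (s β : ℝ) (hβ : β ∈ Set.Ioo (1/2 : ℝ) 1)
    (u : sphere (0 : EuclideanSpace ℝ (Fin d)) 1) :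
    (1 - β)^2 ≤ (phiHat d g s β u)^2 ∧ (phiHat d g s β u)^2 ≤ 1 := by
  obtain ⟨h1, h2⟩ := hβ
  unfold phiHat
  split_ifs <;> constructor <;> nlinarith

lemma phi_abs {d : ℕ} (g : EuclideanSpace ℝ (Fin d)) (s β : ℝ) (hβ : β ∈ Set.Ioo (1/2 : ℝ) 1)
    (u : sphere (0 : EuclideanSpace ℝ (Fin d)) 1) :
    |phiHat d g s β u| ≤ 1 := by
  have := (phi_sq g s β hβ u).2
  exact (sq_le_one_iff_abs_le_one _).1 this

lemma inner_abs {d : ℕ} (v : EuclideanSpace ℝ (Fin d)) (hv : ‖v‖ = 1)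
    (u : sphere (0 : EuclideanSpace ℝ (Fin d)) 1) :
    |⟪v, (u : EuclideanSpace ℝ (Fin d))⟫| ≤ 1 := by
  have := abs_real_inner_le_norm v (u : EuclideanSpace ℝ (Fin d))
  simpa [hv] using this

lemma m_lower {d : ℕ} (hd : 2 ≤ d) (g : EuclideanSpace ℝ (Fin d)) (hg : ‖g‖ = 1) (s β q : ℝ)
    (hs : 0 ≤ s) (hq : q < 1)
    (hcap : (sphereUniform d {u : (sphere (0 : EuclideanSpace ℝ (Fin d)) 1) |
          -s ≤ ⟪g, (u : EuclideanSpace ℝ (Fin d))⟫}).toReal = q) :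
    (1 - q) / (8 * (2 - q)) / √d ≤ ∫ u, phiHat d g s β u * ⟪g, (u : EuclideanSpace ℝ (Fin d))⟫
              ∂(sphereUniform d) := by
  have := sphereUniform_prob d hd
  have hd0 : (0:ℝ) < d := by positivity
  have hr : 0 < √(d:ℝ) := by positivity
  let a : sphere (0 : EuclideanSpace ℝ (Fin d)) 1 → ℝ := fun u => ⟪g, (u : EuclideanSpace ℝ (Fin d))⟫
  have hac : Continuous a := by fun_prop
  let h : sphere (0 : EuclideanSpace ℝ (Fin d)) 1 → ℝ := fun u => if -s < a u then 0 else - a u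
  have hm : Measurable h := Measurable.ite (measurableSet_lt measurable_const hac.measurable)
    measurable_const hac.measurable.neg
  have hi : Integrable h (sphereUniform d) := by
    apply Integrable.of_bound hm.aestronglyMeasurable 1
    filter_upwards with u
    have := inner_abs g hg u
    simp only [h, a]
    split_ifs
    · simp
    · simpa using this
  have e1 : ∫ u, phiHat d g s β u * ⟪g, (u : EuclideanSpace ℝ (Fin d))⟫ ∂(sphereUniform d) =
      ∫ u, h u ∂(sphereUniform d) := by
    have : ∀ u, phiHat d g s β u * ⟪g, (u : EuclideanSpace ℝ (Fin d))⟫ = (1 - β) * a u + h u := by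
      intro u
      simp only [phiHat, h, a]
      split_ifs <;> ring
    simp only [this]
    rw [integral_add (sph_int hd _ (by fun_prop)) hi, integral_const_mul, mom1]
    ring
  rw [e1]
  set m := ∫ u, h u ∂(sphereUniform d)
  have hA : MeasurableSet {u | -s ≤ a u} := measurableSet_le measurable_const hac.measurable
  have l1 : s * (1 - q) ≤ m := by
    have : ∫ u, ({u | -s ≤ a u}ᶜ).indicator (fun _ => s) u ∂(sphereUniform d) ≤ m := by
      apply integral_mono ((integrable_const s).indicator hA.compl) hi
      intro u
      simp only [h, Set.indicator, Set.mem_compl_iff, Set.mem_ofPred_eq]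
      split_ifs <;> linarith
    rw [integral_indicator_const _ hA.compl, probReal_compl_eq_one_sub hA] at this
    have hc : (sphereUniform d).real {u | -s ≤ a u} = q := hcap
    rw [hc] at this
    simpa [mul_comm] using this
  have l2 : (∫ u, max (-⟪g, (u : EuclideanSpace ℝ (Fin d))⟫) 0 ∂(sphereUniform d)) - s ≤ m := by
    have : ∫ u, (max (-⟪g, (u : EuclideanSpace ℝ (Fin d))⟫) 0 - s) ∂(sphereUniform d) ≤ m := by
      apply integral_mono (sph_int hd _ (by fun_prop)) hi
      intro u
      simp only [h, a]
      split_ifs with hh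
      · have : max (-⟪g, (u : EuclideanSpace ℝ (Fin d))⟫) 0 ≤ s := max_le (by linarith) hs
        linarith
      · rw [max_eq_left (by linarith)]; linarith
    rw [integral_sub (sph_int hd _ (by fun_prop)) (integrable_const _)] at this
    simpa using this
  have l3 := mom_abs hd g
  have l4 := abs_lower hd g hg
  have l5 : 1 / (2 * √(d:ℝ)) = (1/√d)/2 := by field_simp
  rw [l5] at l4
  have l6 : (1 - q) / (8 * (2 - q)) / √(d:ℝ) = (1-q) * (1/√d) / (8 * (2 - q)) := by
    field_simp
  have hx : 0 < 1 / √(d:ℝ) := by positivity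
  rw [l6, div_le_iff₀ (by linarith)]
  nlinarith

lemma pointwise_bd (N Z D T n v c : ℝ) (hn : 0 < n) (hc : 0 < c) (hZ : 0 ≤ Z) (hNZ : |N| ≤ Z)
    (hZ2 : Z^2 = D + T) (hD : c * n ≤ D) (hv : c ≤ v) :
    |N / Z - N / √(n * v)| ≤ 2 / (√(c*n))^3 * (|N| * (|D - n * v| + |T|)) + 16 * T^4 / (c*n)^4 := by
  set w := √(n*v) with hw
  set r := √(c*n) with hr
  have hr0 : 0 < r := by positivity
  have hr2 : r^2 = c*n := Real.sq_sqrt (by positivity)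
  have hrw : r ≤ w := Real.sqrt_le_sqrt (by nlinarith)
  have hw0 : 0 < w := by linarith
  have hw2 : w^2 = n * v := Real.sq_sqrt (by nlinarith)
  by_cases hT : |T| ≤ c*n/2
  · have hZ2' : r^2/2 ≤ Z^2 := by
      have := neg_abs_le T
      rw [hr2, hZ2]; linarith
    have hZr : r/2 ≤ Z := by
      apply le_of_sq_le_sq _ hZ
      nlinarith
    have hZ0 : 0 < Z := by linarith
    have e : N / Z - N / w = N * ((w^2 - Z^2) / (Z * w * (Z + w))) := by
      field_simp; ring
    have hX : |w^2 - Z^2| ≤ |D - n*v| + |T| := by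
      rw [hw2, hZ2, abs_sub_comm, show D + T - n * v = (D - n*v) + T by ring]
      exact abs_add_le _ _
    have hden : r^3/2 ≤ Z * w * (Z + w) := by
      have : (r/2) * r * r ≤ Z * w * (Z + w) := by
        gcongr
        linarith
      linarith [this]
    have h16 : 0 ≤ 16 * T^4 / (c*n)^4 := by positivity
    refine le_trans ?_ (le_add_of_nonneg_right h16)
    rw [e, abs_mul, abs_div, abs_of_pos (a := Z * w * (Z + w)) (by positivity)]
    calc |N| * (|w^2 - Z^2| / (Z * w * (Z + w))) ≤ |N| * ((|D - n*v| + |T|) / (r^3/2)) := by gcongr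
      _ = _ := by field_simp
  · push Not at hT
    have h1 : |N / Z| ≤ 1 := by
      rw [abs_div, abs_of_nonneg hZ]
      exact div_le_one_of_le₀ hNZ hZ
    have h2 : 1 ≤ 16 * T^4 / (c*n)^4 := by
      rw [le_div_iff₀ (by positivity), one_mul]
      have : (c*n)^4 ≤ (2*|T|)^4 := pow_le_pow_left₀ (by positivity) (by linarith) 4
      calc _ ≤ _ := this
        _ = 16 * (|T|^4) := by ring
        _ = 16 * T^4 := by rw [show |T|^4 = (|T|^2)^2 by ring, sq_abs]; ring
    have h3 : |N / w| ≤ 2 / r^3 * (|N| * (|D - n * v| + |T|)) := by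
      rw [abs_div, abs_of_pos hw0]
      calc |N| / w ≤ |N| / r := by gcongr
        _ = 2 / r^3 * (|N| * (r^2/2)) := by field_simp
        _ ≤ _ := by
          gcongr
          rw [hr2]
          linarith [abs_nonneg (D - n * v)]
    have := abs_sub (N/Z) (N/w)
    linarith

section PiEst
variable {d n : ℕ}

lemma eval_integral (hd : 2 ≤ d) (f : sphere (0 : EuclideanSpace ℝ (Fin d)) 1 → ℝ)
    (hf : Integrable f (sphereUniform d)) (i : Fin n) :
    Integrable (fun ω => f (ω i)) (Measure.pi (fun _ : Fin n => sphereUniform d)) ∧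
    ∫ ω, f (ω i) ∂(Measure.pi (fun _ : Fin n => sphereUniform d)) = ∫ u, f u ∂(sphereUniform d) := by
  have := sphereUniform_prob d hd
  exact ⟨integrable_comp_eval hf, integral_comp_eval hf.aestronglyMeasurable⟩

lemma pair_integral (hd : 2 ≤ d)
    (F : sphere (0 : EuclideanSpace ℝ (Fin d)) 1 × sphere (0 : EuclideanSpace ℝ (Fin d)) 1 → ℝ)
    (hF : Continuous F) (i j : Fin n) (hij : i ≠ j) :
    ∫ ω, F (ω i, ω j) ∂(Measure.pi (fun _ : Fin n => sphereUniform d)) =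
      ∫ u, ∫ v, F (u, v) ∂(sphereUniform d) ∂(sphereUniform d) := by
  have := sphereUniform_prob d hd
  have h1 := ProbabilityTheory.iIndepFun_pi (μ := fun _ : Fin n => sphereUniform d)
    (X := fun _ u => u) (fun i => aemeasurable_id)
  have h2 := h1.indepFun hij
  rw [ProbabilityTheory.indepFun_iff_map_prod_eq_prod_map_map (measurable_pi_apply i).aemeasurable
    (measurable_pi_apply j).aemeasurable] at h2
  have hi : Measure.map (fun ω : Fin n → sphere (0 : EuclideanSpace ℝ (Fin d)) 1 => ω i) _ = _ := (measurePreserving_eval (fun _ : Fin n => sphereUniform d) i).map_eq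
  have hj : Measure.map (fun ω : Fin n → sphere (0 : EuclideanSpace ℝ (Fin d)) 1 => ω j) _ = _ := (measurePreserving_eval (fun _ : Fin n => sphereUniform d) j).map_eq
  rw [hi, hj] at h2
  rw [← integral_prod _ (hF.integrable_of_hasCompactSupport (HasCompactSupport.of_compactSpace F)),
    ← h2, integral_map ((measurable_pi_apply i).prodMk (measurable_pi_apply j)).aemeasurable hF.aestronglyMeasurable]

lemma sphere_norm (u : sphere (0 : EuclideanSpace ℝ (Fin d)) 1) :
    ‖(u : EuclideanSpace ℝ (Fin d))‖ = 1 := by simp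

noncomputable def Yp (p : Fin n × Fin n)
    (ω : Fin n → (sphere (0 : EuclideanSpace ℝ (Fin d)) 1)) : ℝ :=
  if p.1 = p.2 then 0 else
    ⟪((ω p.1 : sphere (0 : EuclideanSpace ℝ (Fin d)) 1) : EuclideanSpace ℝ (Fin d)), 
      ((ω p.2 : sphere (0 : EuclideanSpace ℝ (Fin d)) 1) : EuclideanSpace ℝ (Fin d))⟫

lemma Yp_cont (p : Fin n × Fin n) : Continuous (Yp (d := d) p) := by
  unfold Yp
  split_ifs
  · exact continuous_const
  · fun_prop

lemma Yp_two (hd : 2 ≤ d) (p : Fin n × Fin n) :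
    ∫ ω, (Yp p ω)^2 ∂(Measure.pi (fun _ : Fin n => sphereUniform d)) ≤ 1 / d := by
  have := sphereUniform_prob d hd
  unfold Yp
  split_ifs with h
  · simp
  · rw [pair_integral hd (fun x => ⟪(x.1 : EuclideanSpace ℝ (Fin d)), (x.2 : EuclideanSpace ℝ (Fin d))⟫^2)
      (by fun_prop) _ _ h]
    simp only [mom2 hd _ (sphere_norm _)]
    simp

lemma Yp_four (hd : 2 ≤ d) (p : Fin n × Fin n) :
    ∫ ω, (Yp p ω)^4 ∂(Measure.pi (fun _ : Fin n => sphereUniform d)) ≤ 3 / (d:ℝ)^2 := by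
  have := sphereUniform_prob d hd
  unfold Yp
  split_ifs with h
  · simp; positivity
  · rw [pair_integral hd (fun x => ⟪(x.1 : EuclideanSpace ℝ (Fin d)), (x.2 : EuclideanSpace ℝ (Fin d))⟫^4)
      (by fun_prop) _ _ h]
    have hv : ∫ u : sphere (0 : EuclideanSpace ℝ (Fin d)) 1, (3 / (d:ℝ)^2) ∂(sphereUniform d) = 3 / (d:ℝ)^2 := by
      simp
    rw [← hv]
    apply integral_mono_of_nonneg
    · filter_upwards with u
      exact integral_nonneg (fun v => by positivity)
    · exact integrable_const _
    · filter_upwards with u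
      exact mom4 hd _ (sphere_norm _)

lemma cont_int (hd : 2 ≤ d) (F : (Fin n → (sphere (0 : EuclideanSpace ℝ (Fin d)) 1)) → ℝ)
    (hF : Continuous F) : Integrable F (Measure.pi (fun _ : Fin n => sphereUniform d)) := by
  have := sphereUniform_prob d hd
  exact hF.integrable_of_hasCompactSupport (HasCompactSupport.of_compactSpace F)

noncomputable def DD (g : EuclideanSpace ℝ (Fin d)) (s β : ℝ)
    (ω : Fin n → (sphere (0 : EuclideanSpace ℝ (Fin d)) 1)) : ℝ := ∑ i, (phiHat d g s β (ω i))^2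

lemma phi_sq_int (hd : 2 ≤ d) (g : EuclideanSpace ℝ (Fin d)) (s β : ℝ) (hβ : β ∈ Set.Ioo (1/2 : ℝ) 1) :
    Integrable (fun u => (phiHat d g s β u)^2) (sphereUniform d) := by
  have := sphereUniform_prob d hd
  apply Integrable.of_bound ((phi_meas g s β).pow_const 2).aestronglyMeasurable 1
  filter_upwards with u
  rw [Real.norm_eq_abs, abs_of_nonneg (by positivity)]
  exact (phi_sq g s β hβ u).2

lemma phi_sq_memLp (hd : 2 ≤ d) (g : EuclideanSpace ℝ (Fin d)) (s β : ℝ) (hβ : β ∈ Set.Ioo (1/2 : ℝ) 1) :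
    MemLp (fun u => (phiHat d g s β u)^2) 2 (sphereUniform d) := by
  have := sphereUniform_prob d hd
  apply MemLp.of_bound ((phi_meas g s β).pow_const 2).aestronglyMeasurable 1
  filter_upwards with u
  rw [Real.norm_eq_abs, abs_of_nonneg (by positivity)]
  exact (phi_sq g s β hβ u).2

lemma DD_meas (g : EuclideanSpace ℝ (Fin d)) (s β : ℝ) : Measurable (DD (n := n) g s β) := by
  unfold DD
  apply Finset.measurable_sum
  intro i _
  exact ((phi_meas g s β).comp (measurable_pi_apply i)).pow_const 2

lemma DD_var (hd : 2 ≤ d) (g : EuclideanSpace ℝ (Fin d)) (s β : ℝ) (hβ : β ∈ Set.Ioo (1/2 : ℝ) 1) :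
    Integrable (fun ω => (DD g s β ω - n * ∫ u, (phiHat d g s β u)^2 ∂(sphereUniform d))^2)
      (Measure.pi (fun _ : Fin n => sphereUniform d)) ∧
    ∫ ω, (DD g s β ω - n * ∫ u, (phiHat d g s β u)^2 ∂(sphereUniform d))^2
      ∂(Measure.pi (fun _ : Fin n => sphereUniform d)) ≤ n := by
  have := sphereUniform_prob d hd
  have hv := ProbabilityTheory.variance_sum_pi (ι := Fin n) (μ := fun _ : Fin n => sphereUniform d)
    (X := fun _ u => (phiHat d g s β u)^2) (fun _ => phi_sq_memLp hd g s β hβ)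
  have hDD : (∑ i : Fin n, fun ω : Fin n → (sphere (0 : EuclideanSpace ℝ (Fin d)) 1) =>
      (phiHat d g s β (ω i))^2) = DD g s β := by
    ext ω; simp [DD]
  rw [hDD] at hv
  have hmean : ∫ ω, DD g s β ω ∂(Measure.pi (fun _ : Fin n => sphereUniform d)) =
      n * ∫ u, (phiHat d g s β u)^2 ∂(sphereUniform d) := by
    unfold DD
    rw [integral_finsetSum _ (fun i _ => (eval_integral hd _ (phi_sq_int hd g s β hβ) i).1)]
    simp only [fun i : Fin n => (eval_integral hd _ (phi_sq_int hd g s β hβ) i).2]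
    simp
  constructor
  · have hb : MemLp (DD (n := n) g s β) 2 (Measure.pi (fun _ : Fin n => sphereUniform d)) := by
      apply MemLp.of_bound (DD_meas g s β).aestronglyMeasurable n
      filter_upwards with ω
      rw [Real.norm_eq_abs, abs_of_nonneg (by unfold DD; positivity)]
      unfold DD
      calc _ ≤ ∑ i : Fin n, (1:ℝ) := Finset.sum_le_sum fun i _ => (phi_sq g s β hβ _).2
        _ = n := by simp
    exact (hb.sub (memLp_const _)).integrable_sq
  · rw [ProbabilityTheory.variance_eq_integral (DD_meas g s β).aemeasurable, hmean] at hv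
    rw [hv]
    calc _ ≤ ∑ i : Fin n, (1:ℝ) := by
          refine Finset.sum_le_sum fun i _ => ?_
          refine (ProbabilityTheory.variance_le_expectation_sq ((phi_meas g s β).pow_const 2).aestronglyMeasurable).trans ?_
          have h1 : ∫ u : sphere (0 : EuclideanSpace ℝ (Fin d)) 1, (1:ℝ) ∂(sphereUniform d) = 1 := by simp
          refine le_trans ?_ h1.le
          apply integral_mono_of_nonneg
          · filter_upwards with u
            simp only [Pi.pow_apply, Pi.zero_apply]
            positivity
          · exact integrable_const _
          · filter_upwards with u
            have := phi_sq g s β hβ u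
            simp only [Pi.pow_apply]
            nlinarith [sq_nonneg (phiHat d g s β u)]
      _ = n := by simp

end PiEst

section Core
variable {d n : ℕ}

noncomputable def SS (g : EuclideanSpace ℝ (Fin d)) (s β : ℝ)
    (ω : Fin n → (sphere (0 : EuclideanSpace ℝ (Fin d)) 1)) : EuclideanSpace ℝ (Fin d) :=
  ∑ i, phiHat d g s β (ω i) • ((ω i : EuclideanSpace ℝ (Fin d)))

noncomputable def TT (g : EuclideanSpace ℝ (Fin d)) (s β : ℝ)
    (ω : Fin n → (sphere (0 : EuclideanSpace ℝ (Fin d)) 1)) : ℝ :=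
  ∑ p : Fin n × Fin n, phiHat d g s β (ω p.1) * phiHat d g s β (ω p.2) * Yp p ω

lemma SS_sq (g : EuclideanSpace ℝ (Fin d)) (s β : ℝ)
    (ω : Fin n → (sphere (0 : EuclideanSpace ℝ (Fin d)) 1)) :
    ‖SS g s β ω‖^2 = DD g s β ω + TT g s β ω := by
  rw [← real_inner_self_eq_norm_sq, SS, sum_inner]
  simp only [inner_sum]
  rw [DD, TT, Fintype.sum_prod_type, ← Finset.sum_add_distrib]
  refine Finset.sum_congr rfl fun i _ => ?_
  have : (phiHat d g s β (ω i))^2 = ∑ j, if i = j then (phiHat d g s β (ω i))^2 else 0 := by simp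
  rw [this, ← Finset.sum_add_distrib]
  refine Finset.sum_congr rfl fun j _ => ?_
  rw [real_inner_smul_left, real_inner_smul_right]
  unfold Yp
  by_cases h : i = j
  · subst h
    simp only [real_inner_self_eq_norm_sq, sphere_norm]
    simp; ring
  · simp [h]; ring

lemma cos_eq (hn : 0 < n) (g : EuclideanSpace ℝ (Fin d)) (s β : ℝ)
    (ω : Fin n → (sphere (0 : EuclideanSpace ℝ (Fin d)) 1)) :
    ⟪g, Ghat d n g s β ω⟫ / ‖Ghat d n g s β ω‖ = ⟪g, SS g s β ω⟫ / ‖SS g s β ω‖ := by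
  have h : Ghat d n g s β ω = (1 / (n : ℝ)) • SS g s β ω := rfl
  have hn' : (0:ℝ) < 1 / n := by positivity
  rw [h, real_inner_smul_right, norm_smul, Real.norm_eq_abs, abs_of_pos hn',
    mul_div_mul_left _ _ hn'.ne']

lemma sq_TT (g : EuclideanSpace ℝ (Fin d)) (s β : ℝ) (hβ : β ∈ Set.Ioo (1/2 : ℝ) 1)
    (ω : Fin n → (sphere (0 : EuclideanSpace ℝ (Fin d)) 1)) :
    (TT g s β ω)^2 ≤ (n:ℝ)^2 * ∑ p : Fin n × Fin n, (Yp p ω)^2 := by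
  have h := sq_sum_le_card_mul_sum_sq (s := (Finset.univ : Finset (Fin n × Fin n)))
    (f := fun p => phiHat d g s β (ω p.1) * phiHat d g s β (ω p.2) * Yp p ω)
  have hc : ((Finset.univ : Finset (Fin n × Fin n)).card : ℝ) = (n:ℝ)^2 := by
    simp; ring
  rw [hc] at h
  refine h.trans ?_
  refine mul_le_mul_of_nonneg_left (Finset.sum_le_sum fun p _ => ?_) (by positivity)
  rw [mul_pow, mul_pow]
  have h1 := (phi_sq g s β hβ (ω p.1)).2
  have h2 := (phi_sq g s β hβ (ω p.2)).2
  calc _ ≤ 1 * 1 * (Yp p ω)^2 := by gcongr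
    _ = _ := by ring

lemma four_TT (g : EuclideanSpace ℝ (Fin d)) (s β : ℝ) (hβ : β ∈ Set.Ioo (1/2 : ℝ) 1)
    (ω : Fin n → (sphere (0 : EuclideanSpace ℝ (Fin d)) 1)) :
    (TT g s β ω)^4 ≤ (n:ℝ)^6 * ∑ p : Fin n × Fin n, (Yp p ω)^4 := by
  have h := sq_sum_le_card_mul_sum_sq (s := (Finset.univ : Finset (Fin n × Fin n)))
    (f := fun p => (Yp p ω)^2)
  have hc : ((Finset.univ : Finset (Fin n × Fin n)).card : ℝ) = (n:ℝ)^2 := by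
    simp; ring
  rw [hc] at h
  calc (TT g s β ω)^4 = ((TT g s β ω)^2)^2 := by ring
    _ ≤ ((n:ℝ)^2 * ∑ p : Fin n × Fin n, (Yp p ω)^2)^2 := by
        gcongr; exact sq_TT g s β hβ ω
    _ = (n:ℝ)^4 * (∑ p : Fin n × Fin n, (Yp p ω)^2)^2 := by ring
    _ ≤ (n:ℝ)^4 * ((n:ℝ)^2 * ∑ p : Fin n × Fin n, ((Yp p ω)^2)^2) := by gcongr
    _ = _ := by
      simp only [← pow_mul]
      ring

lemma inner_SS (g : EuclideanSpace ℝ (Fin d)) (s β : ℝ)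
    (ω : Fin n → (sphere (0 : EuclideanSpace ℝ (Fin d)) 1)) :
    ⟪g, SS g s β ω⟫ = ∑ i, phiHat d g s β (ω i) * ⟪g, (ω i : EuclideanSpace ℝ (Fin d))⟫ := by
  rw [SS, inner_sum]
  simp only [real_inner_smul_right]

lemma sq_NN (g : EuclideanSpace ℝ (Fin d)) (s β : ℝ) (hβ : β ∈ Set.Ioo (1/2 : ℝ) 1)
    (ω : Fin n → (sphere (0 : EuclideanSpace ℝ (Fin d)) 1)) :
    ⟪g, SS g s β ω⟫^2 ≤ n * ∑ i, ⟪g, (ω i : EuclideanSpace ℝ (Fin d))⟫^2 := by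
  rw [inner_SS]
  have h := sq_sum_le_card_mul_sum_sq (s := (Finset.univ : Finset (Fin n)))
    (f := fun i => phiHat d g s β (ω i) * ⟪g, (ω i : EuclideanSpace ℝ (Fin d))⟫)
  simp only [Finset.card_univ, Fintype.card_fin] at h
  refine h.trans ?_
  refine mul_le_mul_of_nonneg_left (Finset.sum_le_sum fun i _ => ?_) (by positivity)
  rw [mul_pow]
  have h1 := (phi_sq g s β hβ (ω i)).2
  exact mul_le_of_le_one_left (by positivity) h1

lemma SS_meas (g : EuclideanSpace ℝ (Fin d)) (s β : ℝ) : Measurable (SS (n := n) g s β) := by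
  unfold SS
  apply Finset.measurable_sum
  intro i _
  exact ((phi_meas g s β).comp (measurable_pi_apply i)).smul
    (measurable_subtype_coe.comp (measurable_pi_apply i))

lemma phia_int (hd : 2 ≤ d) (g : EuclideanSpace ℝ (Fin d)) (hg : ‖g‖ = 1)
    (s β : ℝ) (hβ : β ∈ Set.Ioo (1/2 : ℝ) 1) :
    Integrable (fun u => phiHat d g s β u * ⟪g, (u : EuclideanSpace ℝ (Fin d))⟫) (sphereUniform d) := by
  have := sphereUniform_prob d hd
  have hc : Continuous (fun u : sphere (0 : EuclideanSpace ℝ (Fin d)) 1 =>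
    ⟪g, (u : EuclideanSpace ℝ (Fin d))⟫) := by fun_prop
  apply Integrable.of_bound ((phi_meas g s β).mul hc.measurable).aestronglyMeasurable 1
  filter_upwards with u
  rw [Pi.mul_apply, norm_mul, Real.norm_eq_abs, Real.norm_eq_abs]
  exact mul_le_one₀ (phi_abs g s β hβ u) (abs_nonneg _) (inner_abs g hg u)

lemma NN_int (hd : 2 ≤ d) (g : EuclideanSpace ℝ (Fin d)) (hg : ‖g‖ = 1)
    (s β : ℝ) (hβ : β ∈ Set.Ioo (1/2 : ℝ) 1) :
    Integrable (fun ω => ⟪g, SS g s β ω⟫) (Measure.pi (fun _ : Fin n => sphereUniform d)) ∧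
    ∫ ω, ⟪g, SS g s β ω⟫ ∂(Measure.pi (fun _ : Fin n => sphereUniform d)) =
      n * ∫ u, phiHat d g s β u * ⟪g, (u : EuclideanSpace ℝ (Fin d))⟫ ∂(sphereUniform d) := by
  simp only [inner_SS]
  constructor
  · exact integrable_finsetSum _ (fun i _ => (eval_integral hd _ (phia_int hd g hg s β hβ) i).1)
  · rw [integral_finsetSum _ (fun i _ => (eval_integral hd _ (phia_int hd g hg s β hβ) i).1)]
    simp only [fun i : Fin n => (eval_integral hd _ (phia_int hd g hg s β hβ) i).2]
    simp

lemma cos_int (hd : 2 ≤ d) (g : EuclideanSpace ℝ (Fin d)) (hg : ‖g‖ = 1) (s β : ℝ) :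
    Integrable (fun ω => ⟪g, SS g s β ω⟫ / ‖SS g s β ω‖)
      (Measure.pi (fun _ : Fin n => sphereUniform d)) := by
  have := sphereUniform_prob d hd
  have hm : Measurable (fun ω => ⟪g, SS (n := n) g s β ω⟫ / ‖SS g s β ω‖) := by
    have := SS_meas (n := n) g s β
    fun_prop
  apply Integrable.of_bound hm.aestronglyMeasurable 1
  filter_upwards with ω
  rw [norm_div, norm_norm]
  apply div_le_one_of_le₀ _ (norm_nonneg _)
  have := norm_inner_le_norm (𝕜 := ℝ) g (SS g s β ω)
  simpa [hg] using this

lemma core_bd (hd : 2 ≤ d) (hn : 0 < n) (g : EuclideanSpace ℝ (Fin d)) (hg : ‖g‖ = 1) (s β : ℝ)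
    (hβ : β ∈ Set.Ioo (1/2 : ℝ) 1) (l : ℝ) (hl : 0 < l) (c : ℝ) (hc : c = (1-β)^2) :
    |(∫ ω, (⟪g, Ghat d n g s β ω⟫ / ‖Ghat d n g s β ω‖)
        ∂(Measure.pi (fun _ : Fin n => sphereUniform d))) -
      Real.sqrt n * (∫ u, phiHat d g s β u * ⟪g, (u : EuclideanSpace ℝ (Fin d))⟫ ∂(sphereUniform d))
          / Real.sqrt (∫ u, (phiHat d g s β u) ^ 2 ∂(sphereUniform d))| ≤
    2 / (√(c*n))^3 * (l * ((n:ℝ)^2/d) + (n + (n:ℝ)^4/d)/l) + 16 / (c*n)^4 * ((n:ℝ)^8 * (3/(d:ℝ)^2)) := by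
  have := sphereUniform_prob d hd
  have hc0 : 0 < c := by rw [hc]; have := hβ.2; nlinarith
  have hn' : (0:ℝ) < n := by positivity
  set v := ∫ u, (phiHat d g s β u) ^ 2 ∂(sphereUniform d) with hv
  set m := ∫ u, phiHat d g s β u * ⟪g, (u : EuclideanSpace ℝ (Fin d))⟫ ∂(sphereUniform d) with hm
  have hcv : c ≤ v := by
    have h1 : ∫ u : sphere (0 : EuclideanSpace ℝ (Fin d)) 1, c ∂(sphereUniform d) = c := by simp
    rw [← h1]
    apply integral_mono (integrable_const _) (phi_sq_int hd g s β hβ)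
    intro u
    rw [hc]
    exact (phi_sq g s β hβ u).1
  have hv0 : 0 < v := by linarith
  have hJ : √(n:ℝ) * m / √v = ∫ ω, ⟪g, SS g s β ω⟫ / √(n * v) ∂(Measure.pi (fun _ : Fin n => sphereUniform d)) := by
    rw [integral_div, (NN_int hd g hg s β hβ).2, ← hm, Real.sqrt_mul hn'.le]
    have : (n:ℝ) = √(n:ℝ) * √n := (Real.mul_self_sqrt hn'.le).symm
    have h0 : 0 < √(n:ℝ) := by positivity
    have h1 : 0 < √v := by positivity
    nth_rewrite 2 [this]
    field_simp
  simp only [cos_eq hn]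
  rw [hJ, ← integral_sub (cos_int hd g hg s β) ((NN_int hd g hg s β hβ).1.div_const _)]
  let A : (Fin n → (sphere (0 : EuclideanSpace ℝ (Fin d)) 1)) → ℝ :=
    fun ω => ∑ i, ⟪g, (ω i : EuclideanSpace ℝ (Fin d))⟫^2
  let B : (Fin n → (sphere (0 : EuclideanSpace ℝ (Fin d)) 1)) → ℝ := fun ω => (DD g s β ω - n * v)^2
  let C2 : (Fin n → (sphere (0 : EuclideanSpace ℝ (Fin d)) 1)) → ℝ := 
    fun ω => ∑ p : Fin n × Fin n, (Yp p ω)^2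
  let C4 : (Fin n → (sphere (0 : EuclideanSpace ℝ (Fin d)) 1)) → ℝ := 
    fun ω => ∑ p : Fin n × Fin n, (Yp p ω)^4
  have hYc : ∀ p : Fin n × Fin n, Continuous (Yp (d := d) p) := Yp_cont
  have iA : Integrable A (Measure.pi (fun _ : Fin n => sphereUniform d)) := cont_int hd _ (by fun_prop)
  have iB : Integrable B (Measure.pi (fun _ : Fin n => sphereUniform d)) := (DD_var hd g s β hβ).1
  have iC2 : Integrable C2 (Measure.pi (fun _ : Fin n => sphereUniform d)) := cont_int hd _ (by fun_prop)
  have iC4 : Integrable C4 (Measure.pi (fun _ : Fin n => sphereUniform d)) := cont_int hd _ (by fun_prop)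
  have eA : ∫ ω, A ω ∂(Measure.pi (fun _ : Fin n => sphereUniform d)) = n / d := by
    have ia : Integrable (fun u : sphere (0 : EuclideanSpace ℝ (Fin d)) 1 => ⟪g, (u : EuclideanSpace ℝ (Fin d))⟫^2)
      (sphereUniform d) := sph_int hd _ (by fun_prop)
    simp only [A]
    rw [integral_finsetSum _ (fun i _ => (eval_integral hd _ ia i).1)]
    simp only [fun i : Fin n => (eval_integral hd _ ia i).2, mom2 hd g hg]
    simp [div_eq_mul_inv]
  have eB : ∫ ω, B ω ∂(Measure.pi (fun _ : Fin n => sphereUniform d)) ≤ n := (DD_var hd g s β hβ).2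
  have eC2 : ∫ ω, C2 ω ∂(Measure.pi (fun _ : Fin n => sphereUniform d)) ≤ (n:ℝ)^2 / d := by
    simp only [C2]
    rw [integral_finsetSum _ (fun i _ => cont_int hd _ (by fun_prop))]
    calc _ ≤ ∑ p : Fin n × Fin n, (1:ℝ)/d := Finset.sum_le_sum fun p _ => Yp_two hd p
      _ = _ := by simp; ring
  have eC4 : ∫ ω, C4 ω ∂(Measure.pi (fun _ : Fin n => sphereUniform d)) ≤ (n:ℝ)^2 * (3 / (d:ℝ)^2) := by
    simp only [C4]
    rw [integral_finsetSum _ (fun i _ => cont_int hd _ (by fun_prop))]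
    calc _ ≤ ∑ p : Fin n × Fin n, 3/(d:ℝ)^2 := Finset.sum_le_sum fun p _ => Yp_four hd p
      _ = _ := by
        rw [Finset.sum_const, Finset.card_univ, Fintype.card_prod, Fintype.card_fin, nsmul_eq_mul]
        push_cast
        ring
  let U : (Fin n → (sphere (0 : EuclideanSpace ℝ (Fin d)) 1)) → ℝ := fun ω =>
    2 / (√(c*n))^3 * (l * (n * A ω) + (B ω + (n:ℝ)^2 * C2 ω) / l) + 16 / (c*n)^4 * ((n:ℝ)^6 * C4 ω)
  have j1 := (iA.const_mul (n:ℝ)).const_mul l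
  have j2 : Integrable (fun ω => (B ω + (n:ℝ)^2 * C2 ω) / l) (Measure.pi (fun _ : Fin n => sphereUniform d)) := (iB.add (iC2.const_mul ((n:ℝ)^2))).div_const l
  have j3 : Integrable (fun ω => 2 / (√(c*n))^3 * (l * (n * A ω) + (B ω + (n:ℝ)^2 * C2 ω) / l)) (Measure.pi (fun _ : Fin n => sphereUniform d)) := (j1.add j2).const_mul (2 / (√(c*n))^3)
  have j4 := (iC4.const_mul ((n:ℝ)^6)).const_mul (16 / (c*n)^4)
  have iU : Integrable U (Measure.pi (fun _ : Fin n => sphereUniform d)) := j3.add j4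
  have eU : ∫ ω, U ω ∂(Measure.pi (fun _ : Fin n => sphereUniform d)) ≤
      2 / (√(c*n))^3 * (l * ((n:ℝ)^2/d) + (n + (n:ℝ)^4/d)/l) + 16 / (c*n)^4 * ((n:ℝ)^8 * (3/(d:ℝ)^2)) := by
    have : ∫ ω, U ω ∂(Measure.pi (fun _ : Fin n => sphereUniform d)) =
      2 / (√(c*n))^3 * (l * (n * ∫ ω, A ω ∂(Measure.pi (fun _ : Fin n => sphereUniform d))) +
        ((∫ ω, B ω ∂(Measure.pi (fun _ : Fin n => sphereUniform d))) + (n:ℝ)^2 * ∫ ω, C2 ω ∂(Measure.pi (fun _ : Fin n => sphereUniform d))) / l) +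
        16 / (c*n)^4 * ((n:ℝ)^6 * ∫ ω, C4 ω ∂(Measure.pi (fun _ : Fin n => sphereUniform d))) := by
      rw [← integral_const_mul, ← integral_const_mul, ← integral_const_mul, ← integral_const_mul, ← integral_const_mul,
        ← integral_add iB (iC2.const_mul ((n:ℝ)^2)), ← integral_div, ← integral_add j1 j2,
        ← integral_const_mul, ← integral_add j3 j4]
    rw [this, eA]
    have e1 : (n:ℝ) * (n / d) = (n:ℝ)^2/d := by ring
    have e2 : (n:ℝ)^4/d = (n:ℝ)^2 * ((n:ℝ)^2 / d) := by ring
    have e3 : (n:ℝ)^8 * (3/(d:ℝ)^2) = (n:ℝ)^6 * ((n:ℝ)^2 * (3/(d:ℝ)^2)) := by ring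
    rw [e1, e2, e3]
    gcongr
  refine le_trans ?_ eU
  refine (abs_integral_le_integral_abs).trans ?_
  apply integral_mono_of_nonneg
  · filter_upwards with ω
    exact abs_nonneg _
  · exact iU
  · filter_upwards with ω
    have hD : c * n ≤ DD g s β ω := by
      unfold DD
      calc c * n = ∑ i : Fin n, c := by simp [mul_comm]
        _ ≤ _ := Finset.sum_le_sum fun i _ => by rw [hc]; exact (phi_sq g s β hβ _).1
    have hNZ : |⟪g, SS g s β ω⟫| ≤ ‖SS g s β ω‖ := by
      have := abs_real_inner_le_norm g (SS g s β ω)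
      simpa [hg] using this
    have hp := pointwise_bd _ _ _ _ n v c hn' hc0 (norm_nonneg _) hNZ (SS_sq g s β ω) hD hcv
    refine hp.trans ?_
    have k1 := sq_NN g s β hβ ω
    have k2 := sq_TT g s β hβ ω
    have k4 := four_TT g s β hβ ω
    set N := ⟪g, SS g s β ω⟫
    set T := TT g s β ω
    set X := DD g s β ω - n * v with hX
    have am : ∀ y : ℝ, |N| * |y| ≤ l * N^2 / 2 + y^2 / l / 2 := by
      intro y
      rw [← sq_abs N, ← sq_abs y]
      have : 0 ≤ (l * |N| - |y|)^2 / l := by positivity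
      have e : (l * |N| - |y|)^2 / l = l * |N|^2 - 2 * (|N| * |y|) + |y|^2 / l := by
        field_simp
        ring
      linarith
    have h3 : |N| * (|X| + |T|) ≤ l * (n * A ω) + (B ω + (n:ℝ)^2 * C2 ω) / l := by
      have a1 := am X
      have a2 := am T
      have a3 : l * N^2 ≤ l * (n * A ω) := by gcongr
      have a4 : T^2 / l ≤ ((n:ℝ)^2 * C2 ω) / l := by gcongr
      have a5 : 0 ≤ X^2 / l := by positivity
      have a6 : 0 ≤ T^2 / l := by positivity
      have a7 : (B ω + (n:ℝ)^2 * C2 ω) / l = X^2 / l + ((n:ℝ)^2 * C2 ω) / l := by rw [add_div]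
      rw [a7, mul_add]
      linarith
    have h4 : 16 * T^4 / (c*n)^4 ≤ 16 / (c*n)^4 * ((n:ℝ)^6 * C4 ω) := by
      rw [mul_div_right_comm]
      gcongr
    simp only [U]
    gcongr

end Core

lemma final_arith (μ J d n y c κ : ℝ) (hy1 : 1 ≤ y) (hn1 : y^3 ≤ n) (hn2 : n ≤ 2 * y^3)
    (hy8 : y^8 ≤ d) (hc0 : 0 < c) (hκ : 0 < κ)
    (hcore : |μ - J| ≤ 2 / (√(c*n))^3 * (√d / y * (n^2/d) + (n + n^4/d)/(√d / y))
      + 16 / (c*n)^4 * (n^8 * (3/d^2)))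
    (hJ : √n * (κ / √d) ≤ J) :
    |μ / J - 1| ≤ (12 / (√c)^3 + 576 / c^4) / κ * (1 / y) := by
  have hy0 : 0 < y := by linarith
  have hn0 : 0 < n := lt_of_lt_of_le (by positivity) hn1
  have hd0 : 0 < d := lt_of_lt_of_le (by positivity) hy8
  rw [Real.sqrt_mul hc0.le] at hcore
  set k := √n with hk
  set r := √d with hr
  set e := √c with he
  have hk0 : 0 < k := by positivity
  have hr0 : 0 < r := by positivity
  have he0 : 0 < e := by positivity
  have hk2 : n = k^2 := (Real.sq_sqrt hn0.le).symm
  have hr2 : d = r^2 := (Real.sq_sqrt hd0.le).symm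
  have b1 : y^2 ≤ k^2 := by
    rw [← hk2]; exact (pow_le_pow_right₀ hy1 (by norm_num)).trans hn1
  have b2 : k^4 * y^2 ≤ 4 * r^2 := by
    calc k^4 * y^2 = n^2 * y^2 := by rw [hk2]; ring
      _ ≤ (2*y^3)^2 * y^2 := by gcongr
      _ = 4 * y^8 := by ring
      _ ≤ 4 * d := by gcongr
      _ = _ := by rw [hr2]
  have b3 : k^7 * y ≤ 12 * r^3 := by
    apply le_of_sq_le_sq _ (by positivity)
    calc (k^7*y)^2 = n^7 * y^2 := by rw [hk2]; ring
      _ ≤ (2*y^3)^7 * y^2 := by gcongr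
      _ = 128 * y^23 := by ring
      _ ≤ 128 * y^24 := by gcongr <;> norm_num [hy1]
      _ = 128 * (y^8)^3 := by ring
      _ ≤ 128 * d^3 := by gcongr
      _ = 128 * r^6 := by rw [hr2]; ring
      _ ≤ 144 * r^6 := by gcongr; norm_num
      _ = _ := by ring
  have t1 : y / (k * r) ≤ k / (r * y) := by
    rw [div_le_div_iff₀ (by positivity) (by positivity)]
    have := mul_le_mul_of_nonneg_left b1 hr0.le
    nlinarith
  have t2 : k^5 * y / r^3 ≤ 4 * (k / (r * y)) := by
    rw [mul_div_assoc', div_le_div_iff₀ (by positivity) (by positivity)]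
    calc _ = (k * r) * (k^4 * y^2) := by ring
      _ ≤ (k * r) * (4 * r^2) := by gcongr
      _ = _ := by ring
  have t3 : k^8 / r^4 ≤ 12 * (k / (r * y)) := by
    rw [mul_div_assoc', div_le_div_iff₀ (by positivity) (by positivity)]
    calc _ = (k * r) * (k^7 * y) := by ring
      _ ≤ (k * r) * (12 * r^3) := by gcongr
      _ = _ := by ring
  have hR : |μ - J| ≤ (12 / e^3 + 576 / c^4) * (k / (r * y)) := by
    refine hcore.trans ?_
    rw [hk2, hr2]
    calc _ = 2 / e^3 * (k / (r * y) + y / (k * r) + k^5 * y / r^3) + 48 / c^4 * (k^8/r^4) := by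
          field_simp
          ring
      _ ≤ 2 / e^3 * (k / (r * y) + k / (r * y) + 4 * (k / (r * y))) + 48 / c^4 * (12 * (k / (r * y))) := by
          gcongr
      _ = _ := by ring
  have hJ0 : 0 < J := lt_of_lt_of_le (by positivity) hJ
  have : μ / J - 1 = (μ - J) / J := by field_simp
  rw [this, abs_div, abs_of_pos hJ0, div_le_iff₀ hJ0]
  refine hR.trans ?_
  calc (12 / e^3 + 576 / c^4) * (k / (r * y)) = (12 / e ^ 3 + 576 / c ^ 4) / κ * (1 / y) * (k * (κ / r)) := by
        field_simp
    _ ≤ _ := by gcongr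

/-- **Theorem 2 (Expected Cosine Similarity Approximation).** Fix
`z ∈ (0,1/8)`, `q ∈ [1/2,1)`, `β ∈ (1/2,1)`. For each `d ≥ 2` choose the cap
threshold `s d ∈ [0,1)` with `P[⟨g,u⟩ ≥ −s d] = q`, take `n_d = ⌈d^(3z)⌉`
i.i.d. uniform samples, and let `μ d = E[⟨g,Ĝ⟩/‖Ĝ‖]` and
`J d = √n_d·E[φ̂(u₁)⟨g,u₁⟩]/√(E[φ̂(u₁)²])`. Then there are `K > 0` and `D₀`
such that `|μ d / J d − 1| ≤ K·d^(−z)` for all `d ≥ D₀`. -/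
theorem expected_cosine_similarity_approx
    (z q β : ℝ) (hz : z ∈ Set.Ioo (0 : ℝ) (1/8))
    (hq : q ∈ Set.Ico (1/2 : ℝ) 1) (hβ : β ∈ Set.Ioo (1/2 : ℝ) 1)
    (g : ∀ d : ℕ, EuclideanSpace ℝ (Fin d)) (s : ℕ → ℝ) (μ J : ℕ → ℝ)
    (hg : ∀ d : ℕ, 2 ≤ d → ‖g d‖ = 1)
    (hs : ∀ d : ℕ, 2 ≤ d → s d ∈ Set.Ico (0 : ℝ) 1)
    (hcap : ∀ d : ℕ, 2 ≤ d →
      (sphereUniform d {u : (sphere (0 : EuclideanSpace ℝ (Fin d)) 1) |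
          -(s d) ≤ ⟪g d, (u : EuclideanSpace ℝ (Fin d))⟫}).toReal = q)
    (hμ : ∀ d : ℕ, 2 ≤ d →
      μ d = ∫ ω : Fin (⌈(d : ℝ) ^ (3 * z)⌉₊) → (sphere (0 : EuclideanSpace ℝ (Fin d)) 1),
          (⟪g d, Ghat d (⌈(d : ℝ) ^ (3 * z)⌉₊) (g d) (s d) β ω⟫ /
            ‖Ghat d (⌈(d : ℝ) ^ (3 * z)⌉₊) (g d) (s d) β ω‖)
          ∂(Measure.pi (fun _ : Fin (⌈(d : ℝ) ^ (3 * z)⌉₊) => sphereUniform d)))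
    (hJ : ∀ d : ℕ, 2 ≤ d →
      J d = Real.sqrt (⌈(d : ℝ) ^ (3 * z)⌉₊ : ℝ)
          * (∫ u, phiHat d (g d) (s d) β u * ⟪g d, (u : EuclideanSpace ℝ (Fin d))⟫
              ∂(sphereUniform d))
          / Real.sqrt (∫ u, (phiHat d (g d) (s d) β u) ^ 2 ∂(sphereUniform d))) :
    ∃ K : ℝ, 0 < K ∧ ∃ D₀ : ℕ, ∀ d : ℕ, D₀ ≤ d →
      |μ d / J d - 1| ≤ K * (d : ℝ) ^ (-z) := by
  have hβ2 := hβ.2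
  have hq1 := hq.2
  set c := (1-β)^2 with hc
  have hc0 : 0 < c := by rw [hc]; nlinarith
  set κ := (1 - q) / (8 * (2 - q)) with hκ
  have hκ0 : 0 < κ := by
    have : 0 < 1 - q := by linarith
    have : 0 < 2 - q := by linarith
    positivity
  refine ⟨(12 / (√c)^3 + 576 / c^4) / κ, by positivity, 2, fun d hd => ?_⟩
  have hP := sphereUniform_prob d hd
  have hd0 : (0:ℝ) < d := by positivity
  have hd1 : (1:ℝ) ≤ d := by exact_mod_cast (by omega : 1 ≤ d)
  set y := (d:ℝ)^z with hy
  have hy1 : 1 ≤ y := Real.one_le_rpow hd1 hz.1.le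
  have hy3 : (d:ℝ)^(3*z) = y^3 := by
    rw [hy, ← Real.rpow_natCast, ← Real.rpow_mul hd0.le]; congr 1; push_cast; ring
  have hy8 : y^8 ≤ d := by
    have : y^8 = (d:ℝ)^(8*z) := by
      rw [hy, ← Real.rpow_natCast, ← Real.rpow_mul hd0.le]; congr 1; push_cast; ring
    rw [this]
    calc (d:ℝ)^(8*z) ≤ (d:ℝ)^(1:ℝ) := Real.rpow_le_rpow_of_exponent_le hd1 (by linarith [hz.2])
      _ = d := Real.rpow_one _
  have hyn : (d:ℝ)^(-z) = 1 / y := by rw [Real.rpow_neg hd0.le, one_div]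
  have hμd := hμ d hd
  have hJd := hJ d hd
  have hn1 : (d:ℝ)^(3*z) ≤ (⌈(d : ℝ) ^ (3 * z)⌉₊ : ℝ) := Nat.le_ceil _
  have hn2 : (⌈(d : ℝ) ^ (3 * z)⌉₊ : ℝ) < (d:ℝ)^(3*z) + 1 := Nat.ceil_lt_add_one (by positivity)
  generalize ⌈(d : ℝ) ^ (3 * z)⌉₊ = n at *
  rw [hy3] at hn1 hn2
  have hy31 : 1 ≤ y^3 := one_le_pow₀ hy1
  have hn2' : (n:ℝ) ≤ 2 * y^3 := by linarith
  have hnR : (0:ℝ) < n := by linarith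
  have hn0 : 0 < n := by exact_mod_cast hnR
  have hr0 : 0 < √(d:ℝ) := by positivity
  have hcore := core_bd hd hn0 (g d) (hg d hd) (s d) β hβ (√(d:ℝ) / y) (by positivity) c hc
  rw [← hμd, ← hJd] at hcore
  have hm := m_lower hd (g d) (hg d hd) (s d) β q (hs d hd).1 hq1 (hcap d hd)
  have hJl : √(n:ℝ) * (κ / √d) ≤ J d := by
    rw [hJd]
    have hv1 : ∫ u, (phiHat d (g d) (s d) β u) ^ 2 ∂(sphereUniform d) ≤ 1 := by
      have h1 : ∫ u : sphere (0 : EuclideanSpace ℝ (Fin d)) 1, (1:ℝ) ∂(sphereUniform d) = 1 := by simp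
      refine le_trans ?_ h1.le
      apply integral_mono (phi_sq_int hd _ _ _ hβ) (integrable_const _)
      intro u
      exact (phi_sq _ _ _ hβ u).2
    have hv0 : c ≤ ∫ u, (phiHat d (g d) (s d) β u) ^ 2 ∂(sphereUniform d) := by
      have h1 : ∫ u : sphere (0 : EuclideanSpace ℝ (Fin d)) 1, c ∂(sphereUniform d) = c := by simp
      refine h1.symm.le.trans ?_
      apply integral_mono (integrable_const _) (phi_sq_int hd _ _ _ hβ)
      intro u
      exact (phi_sq _ _ _ hβ u).1
    rw [le_div_iff₀ (Real.sqrt_pos.2 (by linarith))]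
    have hs1 : √(∫ u, (phiHat d (g d) (s d) β u) ^ 2 ∂(sphereUniform d)) ≤ 1 := Real.sqrt_le_one.2 hv1
    calc _ ≤ √(n:ℝ) * (κ / √d) * 1 := by gcongr
      _ ≤ _ := by rw [mul_one]; gcongr
  exact final_arith (μ d) (J d) d n y c κ hy1 hn1 hn2' hy8 hc0 hκ0 hcore hJl |>.trans_eq (by rw [hyn])
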